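/- Let Â, B̂ : ℝ³ → M_n(ℂ) be smooth maps satisfying ∂_ξB̂ = ∂_yÂ and ∂_ηÂ − ∂_yB̂ + [Â,B̂] = 0, and suppose g : ℝ³ → GL(n,ℂ) is a smooth map with ∂_yg = Âg and ∂_ηg = B̂g. Then g solves the Ward equation with θ = 0: ∂_t((∂_tg)g⁻¹) − ∂_x((∂_xg)g⁻¹) − ∂_y((∂_yg)g⁻¹) − [(∂_tg)g⁻¹, (∂_xg)g⁻¹] = 0. -/

import Mathlib

open Matrix Complex
open scoped Matrix ComplexConjugate

attribute [local instance] Matrix.normedAddCommGroup Matrix.normedSpace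

noncomputable section

/-- `n × n` complex matrices. -/
abbrev Mat (n : ℕ) := Matrix (Fin n) (Fin n) ℂ

/-- Space-time `ℝ³` with coordinates `(x, y, t)`. -/
abbrev P3 : Type := ℝ × ℝ × ℝ

section PartialDerivatives

variable {W : Type*} [NormedAddCommGroup W] [NormedSpace ℝ W]

/-- Partial derivative in `x`. -/
def pdx (f : P3 → W) (p : P3) : W := deriv (fun s => f (s, p.2.1, p.2.2)) p.1

/-- Partial derivative in `y`. -/
def pdy (f : P3 → W) (p : P3) : W := deriv (fun s => f (p.1, s, p.2.2)) p.2.1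

/-- Partial derivative in `t`. -/
def pdt (f : P3 → W) (p : P3) : W := deriv (fun s => f (p.1, p.2.1, s)) p.2.2

/-- Light-cone derivative `∂_ξ = ∂_t + ∂_x`. -/
def pdxi (f : P3 → W) (p : P3) : W := pdt f p + pdx f p

/-- Light-cone derivative `∂_η = ∂_t − ∂_x`. -/
def pdeta (f : P3 → W) (p : P3) : W := pdt f p - pdx f p

end PartialDerivatives

/-- `∂_z = ½(∂_x − i ∂_y)`. -/
def pdz {n : ℕ} (f : P3 → Mat n) (p : P3) : Mat n :=
  (2⁻¹ : ℂ) • (pdx f p - Complex.I • pdy f p)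

/-- `∂_z̄ = ½(∂_x + i ∂_y)`. -/
def pdzbar {n : ℕ} (f : P3 → Mat n) (p : P3) : Mat n :=
  (2⁻¹ : ℂ) • (pdx f p + Complex.I • pdy f p)

/-- Commutator `[X, Y] = XY − YX`. -/
def brk {n : ℕ} (X Y : Mat n) : Mat n := X * Y - Y * X

/-- Anti-Hermitian-valued map. -/
def SkewHerm {n : ℕ} (f : P3 → Mat n) : Prop := ∀ p : P3, (f p)ᴴ = -(f p)

/-- The space-time monopole equation `F_{xy} = −∇_tφ`, `F_{xt} = −∇_yφ`, `F_{yt} = ∇_xφ`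
for the connection `(Ax, Ay, At)` and Higgs field `Ph`, at the point `p`. -/
def MonopoleEqAt {n : ℕ} (Ax Ay At Ph : P3 → Mat n) (p : P3) : Prop :=
  (-(pdx Ay p) + pdy Ax p + brk (Ax p) (Ay p) = -(pdt Ph p - brk (At p) (Ph p))) ∧
  (-(pdx At p) + pdt Ax p + brk (Ax p) (At p) = -(pdy Ph p - brk (Ay p) (Ph p))) ∧
  (-(pdy At p) + pdt Ay p + brk (Ay p) (At p) = pdx Ph p - brk (Ax p) (Ph p))

/-- The space-time monopole equation on all of `ℝ³`. -/
def MonopoleEq {n : ℕ} (Ax Ay At Ph : P3 → Mat n) : Prop :=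
  ∀ p : P3, MonopoleEqAt Ax Ay At Ph p

/-- `E` solves the `μ`-linear system for `(A, φ)`. -/
def SolvesMu {n : ℕ} (Ax Ay At Ph : P3 → Mat n) (μ : ℂ) (E : P3 → Mat n) : Prop :=
  ∀ p : P3,
    (2⁻¹ : ℂ) • pdt E p + μ • pdz E p =
      ((2⁻¹ : ℂ) • (At p + Complex.I • Ph p) +
        μ • ((2⁻¹ : ℂ) • (Ax p - Complex.I • Ay p))) * E p ∧
    (2⁻¹ : ℂ) • pdt E p + μ⁻¹ • pdzbar E p =
      ((2⁻¹ : ℂ) • (At p - Complex.I • Ph p) +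
        μ⁻¹ • ((2⁻¹ : ℂ) • (Ax p + Complex.I • Ay p))) * E p

/-- `F` solves the `λ`-linear system for `(A, φ)`. -/
def SolvesLam {n : ℕ} (Ax Ay At Ph : P3 → Mat n) (lm : ℂ) (F : P3 → Mat n) : Prop :=
  ∀ p : P3,
    lm • pdxi F p - pdy F p = (lm • (At p + Ax p) - (Ay p + Ph p)) * F p ∧
    lm⁻¹ • pdeta F p - pdy F p = (lm⁻¹ • (At p - Ax p) - (Ay p - Ph p)) * F p

section Helpers

variable {n : ℕ}

def mulB (n : ℕ) : Mat n →L[ℝ] Mat n →L[ℝ] Mat n :=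
  LinearMap.toContinuousLinearMap
    ((LinearMap.toContinuousLinearMap : (Mat n →ₗ[ℝ] Mat n) ≃ₗ[ℝ] _).toLinearMap ∘ₗ
      LinearMap.mul ℝ (Mat n))

lemma mulB_apply (X Y : Mat n) : mulB n X Y = X * Y := rfl

lemma contDiff_mul_mat {m : WithTop ℕ∞} {f h : P3 → Mat n} (hf : ContDiff ℝ m f)
    (hh : ContDiff ℝ m h) : ContDiff ℝ m (fun q => f q * h q) :=
  (mulB n).isBoundedBilinearMap.contDiff.comp (hf.prodMk hh)

lemma fderiv_mul_mat {f h : P3 → Mat n} {p : P3} (hf : DifferentiableAt ℝ f p)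
    (hh : DifferentiableAt ℝ h p) (v : P3) :
    fderiv ℝ (fun q => f q * h q) p v = fderiv ℝ f p v * h p + f p * fderiv ℝ h p v := by
  have := (mulB n).fderiv_of_bilinear hf hh
  have h2 := congrArg (fun L => L v) this
  exact h2.trans (add_comm (f p * fderiv ℝ h p v) (fderiv ℝ f p v * h p))

lemma contDiff_entry {m : WithTop ℕ∞} {f : P3 → Mat n} (hf : ContDiff ℝ m f) (i j : Fin n) :
    ContDiff ℝ m (fun q => f q i j) :=
  contDiff_pi.1 (contDiff_pi.1 hf i) j

lemma contDiff_det {m : WithTop ℕ∞} {f : P3 → Mat n}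
    (hf : ∀ i j, ContDiff ℝ m (fun q => f q i j)) :
    ContDiff ℝ m (fun q => (f q).det) := by
  simp only [Matrix.det_apply']
  refine ContDiff.sum fun σ _ => contDiff_const.mul ?_
  exact contDiff_prod fun i _ => hf _ _

lemma contDiff_inv_mat {m : WithTop ℕ∞} {f : P3 → Mat n} (hf : ContDiff ℝ m f)
    (hu : ∀ p, IsUnit (f p)) : ContDiff ℝ m (fun q => (f q)⁻¹) := by
  refine contDiff_pi.2 fun i => contDiff_pi.2 fun j => ?_
  simp only [Matrix.inv_def, Matrix.smul_apply, Ring.inverse_eq_inv', smul_eq_mul,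
    Matrix.adjugate_apply]
  refine ContDiff.mul (ContDiff.inv (contDiff_det (contDiff_entry hf)) fun p => ?_)
    (contDiff_det fun a b => ?_)
  · exact ((Matrix.isUnit_iff_isUnit_det _).1 (hu p)).ne_zero
  · by_cases h : a = j
    · subst h; simp only [Matrix.updateRow_self]; exact contDiff_const
    · simp only [Matrix.updateRow_ne h]; exact contDiff_entry hf a b

lemma pdx_eq {f : P3 → Mat n} {p : P3} (hf : DifferentiableAt ℝ f p) :
    pdx f p = fderiv ℝ f p (1, 0, 0) := by
  have h : HasDerivAt (fun s : ℝ => ((s, p.2.1, p.2.2) : P3)) (1, 0, 0) p.1 :=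
    (hasDerivAt_id _).prodMk ((hasDerivAt_const _ _).prodMk (hasDerivAt_const _ _))
  exact (HasFDerivAt.comp_hasDerivAt (x := p.1) (f := fun s : ℝ => ((s, p.2.1, p.2.2) : P3))
    (hl := hf.hasFDerivAt) (hf := h)).deriv

lemma pdy_eq {f : P3 → Mat n} {p : P3} (hf : DifferentiableAt ℝ f p) :
    pdy f p = fderiv ℝ f p (0, 1, 0) := by
  have h : HasDerivAt (fun s : ℝ => ((p.1, s, p.2.2) : P3)) (0, 1, 0) p.2.1 :=
    (hasDerivAt_const _ _).prodMk ((hasDerivAt_id _).prodMk (hasDerivAt_const _ _))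
  exact (HasFDerivAt.comp_hasDerivAt (x := p.2.1) (f := fun s : ℝ => ((p.1, s, p.2.2) : P3))
    (hl := hf.hasFDerivAt) (hf := h)).deriv

lemma pdt_eq {f : P3 → Mat n} {p : P3} (hf : DifferentiableAt ℝ f p) :
    pdt f p = fderiv ℝ f p (0, 0, 1) := by
  have h : HasDerivAt (fun s : ℝ => ((p.1, p.2.1, s) : P3)) (0, 0, 1) p.2.2 :=
    (hasDerivAt_const _ _).prodMk ((hasDerivAt_const _ _).prodMk (hasDerivAt_id _))
  exact (HasFDerivAt.comp_hasDerivAt (x := p.2.2) (f := fun s : ℝ => ((p.1, p.2.1, s) : P3))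
    (hl := hf.hasFDerivAt) (hf := h)).deriv

/-- Zero curvature of the pure gauge connection. -/
lemma zero_curv {g : P3 → Mat n} (hg : ContDiff ℝ (⊤ : ℕ∞) g) (hu : ∀ p, IsUnit (g p))
    (v w p : P3) :
    fderiv ℝ (fun q => fderiv ℝ g q v * (g q)⁻¹) p w -
      fderiv ℝ (fun q => fderiv ℝ g q w * (g q)⁻¹) p v =
    brk (fderiv ℝ g p w * (g p)⁻¹) (fderiv ℝ g p v * (g p)⁻¹) := by
  have hi := contDiff_inv_mat hg hu
  have hgd : Differentiable ℝ g := hg.differentiable (by simp)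
  have hid : Differentiable ℝ (fun q => (g q)⁻¹) := hi.differentiable (by simp)
  have hf : Differentiable ℝ (fderiv ℝ g) :=
    (contDiff_infty_iff_fderiv.1 hg).2.differentiable (by simp)
  have hfv : ∀ v, DifferentiableAt ℝ (fun q => fderiv ℝ g q v) p := fun v =>
    (hf p).clm_apply (differentiableAt_const v)
  have hsnd : ∀ v w, fderiv ℝ (fun q => fderiv ℝ g q v) p w = fderiv ℝ (fderiv ℝ g) p w v := by
    intro v w
    have h := ((ContinuousLinearMap.apply ℝ (Mat n) v).hasFDerivAt.comp p (hf p).hasFDerivAt).fderiv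
    exact congrArg (fun L => L w) h
  have hsym : fderiv ℝ (fderiv ℝ g) p w v = fderiv ℝ (fderiv ℝ g) p v w :=
    (hg.contDiffAt.isSymmSndFDerivAt
      (by simpa using (WithTop.coe_le_coe.2 (le_top : (2 : ℕ∞) ≤ ⊤) : (2 : WithTop ℕ∞) ≤ ((⊤ : ℕ∞) : WithTop ℕ∞)))) w v
  have hinv : ∀ p, (g p)⁻¹ * g p = 1 := fun p =>
    Matrix.nonsing_inv_mul _ ((Matrix.isUnit_iff_isUnit_det _).1 (hu p))
  have hinv2 : ∀ p, g p * (g p)⁻¹ = 1 := fun p =>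
    Matrix.mul_nonsing_inv _ ((Matrix.isUnit_iff_isUnit_det _).1 (hu p))
  have hdi : ∀ v, fderiv ℝ (fun q => (g q)⁻¹) p v =
      -((g p)⁻¹ * (fderiv ℝ g p v * (g p)⁻¹)) := by
    intro v
    have h := fderiv_mul_mat (hgd p) (hid p) v
    simp only [hinv2] at h
    rw [fderiv_fun_const] at h
    have h' : fderiv ℝ g p v * (g p)⁻¹ + g p * fderiv ℝ (fun q => (g q)⁻¹) p v = 0 := h.symm
    have h3 := congrArg (fun X => (g p)⁻¹ * X) h'
    simp only [mul_add, ← mul_assoc, hinv, one_mul, mul_zero] at h3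
    rw [← mul_assoc]
    exact eq_neg_of_add_eq_zero_right h3
  rw [fderiv_mul_mat (hfv v) (hid p), fderiv_mul_mat (hfv w) (hid p), hsnd, hsnd, hsym, hdi, hdi]
  unfold brk
  noncomm_ring

end Helpers

/-- If `∂_ξ B̂ = ∂_y Â`, `∂_η Â − ∂_y B̂ + [Â, B̂] = 0`, and
`g` satisfies `∂_y g = Â g`, `∂_η g = B̂ g`, then `g` solves the Ward equation with `θ = 0`. -/
theorem ward_equation_theta_zero {n : ℕ} (Ah Bh : P3 → Mat n)
    (hAs : ContDiff ℝ (⊤ : ℕ∞) Ah) (hBs : ContDiff ℝ (⊤ : ℕ∞) Bh)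
    (h1 : ∀ p : P3, pdxi Bh p = pdy Ah p)
    (h2 : ∀ p : P3, pdeta Ah p - pdy Bh p + brk (Ah p) (Bh p) = 0)
    (g : P3 → Mat n) (hgs : ContDiff ℝ (⊤ : ℕ∞) g) (hgl : ∀ p : P3, IsUnit (g p))
    (hgy : ∀ p : P3, pdy g p = Ah p * g p)
    (hge : ∀ p : P3, pdeta g p = Bh p * g p) :
    ∀ p : P3,
      pdt (fun q => pdt g q * (g q)⁻¹) p - pdx (fun q => pdx g q * (g q)⁻¹) p -
        pdy (fun q => pdy g q * (g q)⁻¹) p -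
        brk (pdt g p * (g p)⁻¹) (pdx g p * (g p)⁻¹) = 0 := by
  intro p
  have hi := contDiff_inv_mat hgs hgl
  have hgd : Differentiable ℝ g := hgs.differentiable (by simp)
  have hinv2 : ∀ p, g p * (g p)⁻¹ = 1 := fun p =>
    Matrix.mul_nonsing_inv _ ((Matrix.isUnit_iff_isUnit_det _).1 (hgl p))
  have hc : ∀ v : P3, Differentiable ℝ (fun q => fderiv ℝ g q v * (g q)⁻¹) := fun v =>
    (contDiff_mul_mat
      ((contDiff_infty_iff_fderiv.1 hgs).2.clm_apply contDiff_const) hi).differentiable (by simp)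
  have hB : Bh = fun q => fderiv ℝ g q (0, 0, 1) * (g q)⁻¹ - fderiv ℝ g q (1, 0, 0) * (g q)⁻¹ := by
    funext q
    have := hge q
    rw [pdeta, pdt_eq (hgd q), pdx_eq (hgd q)] at this
    rw [← sub_mul, this, mul_assoc, hinv2, mul_one]
  have hA : (fun q => pdy g q * (g q)⁻¹) = Ah := by
    funext q
    rw [hgy, mul_assoc, hinv2, mul_one]
  have hBd : Differentiable ℝ Bh := hBs.differentiable (by simp)
  have hdB : ∀ w, fderiv ℝ Bh p w = fderiv ℝ (fun q => fderiv ℝ g q (0, 0, 1) * (g q)⁻¹) p w -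
      fderiv ℝ (fun q => fderiv ℝ g q (1, 0, 0) * (g q)⁻¹) p w := by
    intro w
    have h := fderiv_fun_sub (hc (0, 0, 1) p) (hc (1, 0, 0) p)
    rw [hB]
    exact congrArg (fun L => L w) h
  have h1p := h1 p
  rw [pdxi, pdt_eq (hBd p), pdx_eq (hBd p), hdB, hdB] at h1p
  have z := zero_curv hgs hgl (1, 0, 0) (0, 0, 1) p
  have ht : ∀ q, pdt g q = fderiv ℝ g q (0, 0, 1) := fun q => pdt_eq (hgd q)
  have hx : ∀ q, pdx g q = fderiv ℝ g q (1, 0, 0) := fun q => pdx_eq (hgd q)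
  rw [hA]
  simp only [ht, hx]
  rw [pdt_eq (hc _ p), pdx_eq (hc _ p), ← z, ← h1p]
  abel
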